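/- Let ρ₀ be a pure state on n qubits and let Φ be any quantum circuit consisting of L layers, where each layer is a unitary channel followed by n-qubit tensor-product depolarizing noise N_p^{⊗n} with parameter p ∈ (0,1]. Then the von Neumann entropy of the output satisfies S(Φ(ρ₀)) ≥ (1 − (1−p)^L)·n·log 2. -/

import Mathlib

open Matrix
open scoped ComplexOrder

/-- von Neumann entropy of a (Hermitian) matrix, via its eigenvalues. -/
noncomputable def vnEntropy {ι : Type*} [Fintype ι] [DecidableEq ι]
    (M : Matrix ι ι ℂ) : ℝ :=
  if h : M.IsHermitian then -∑ i, h.eigenvalues i * Real.log (h.eigenvalues i) else 0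

/-- Full depolarization of the qubits in `S ⊆ Fin n`, identity elsewhere. -/
noncomputable def depolSet {n : ℕ} (S : Finset (Fin n))
    (ρ : Matrix (Fin n → Fin 2) (Fin n → Fin 2) ℂ) :
    Matrix (Fin n → Fin 2) (Fin n → Fin 2) ℂ :=
  Matrix.of fun x y =>
    if ∀ i ∈ S, x i = y i then
      ((2 : ℂ) ^ S.card)⁻¹ * (((2 : ℂ) ^ (n - S.card))⁻¹ *
        ∑ z : Fin n → Fin 2, ρ (S.piecewise z x) (S.piecewise z y))
    else 0

/-- The tensor-product depolarizing channel `N_p^{⊗n}`. -/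
noncomputable def depolAll {n : ℕ} (p : ℝ)
    (ρ : Matrix (Fin n → Fin 2) (Fin n → Fin 2) ℂ) :
    Matrix (Fin n → Fin 2) (Fin n → Fin 2) ℂ :=
  ∑ S : Finset (Fin n), (((p : ℂ)) ^ S.card * ((1 - p : ℝ) : ℂ) ^ (n - S.card)) • depolSet S ρ

/-- The noisy circuit: `L` layers, each a unitary conjugation followed by `N_p^{⊗n}`. -/
noncomputable def noisyCircuit {n : ℕ} (p : ℝ)
    (U : ℕ → Matrix (Fin n → Fin 2) (Fin n → Fin 2) ℂ) :
    ℕ → Matrix (Fin n → Fin 2) (Fin n → Fin 2) ℂ → Matrix (Fin n → Fin 2) (Fin n → Fin 2) ℂ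
  | 0, ρ => ρ
  | (L + 1), ρ => depolAll p (U L * noisyCircuit p U L ρ * (U L)ᴴ)

open Filter Topology in
theorem tendsto_mul_log_add_mul_sub {a b : ℝ} (ha : 0 ≤ a) :
    Tendsto (fun t : ℝ => a * Real.log (b + t * a) - a * Real.log t) atTop
      (𝓝 (a * Real.log a)) := by
  rcases ha.eq_or_lt with rfl | ha
  · simp
  have h1 : Tendsto (fun t : ℝ => b / t + a) atTop (𝓝 a) := by
    simpa using (tendsto_const_nhds (x := b)).div_atTop tendsto_id |>.add_const a
  have h2 := ((Real.continuousAt_log ha.ne').tendsto.comp h1).const_mul a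
  refine h2.congr' ?_
  filter_upwards [eventually_gt_atTop 0, h1.eventually (lt_mem_nhds ha)] with t ht h3
  have h4 : b + t * a = t * (b / t + a) := by field_simp
  rw [Function.comp, h4, Real.log_mul ht.ne' h3.ne']
  ring

theorem continuousOn_mul_log_add_mul {a b c : ℝ} (ha : 0 ≤ a) (hb : 0 ≤ b) (hc : b = 0 → c = 0) :
    ContinuousOn (fun t : ℝ => c * Real.log (b + t * a)) (Set.Ici 0) := by
  rcases hb.eq_or_lt with rfl | hb
  · simpa [hc rfl] using continuousOn_const
  refine continuousOn_const.mul (ContinuousOn.log (by fun_prop) fun t ht => ?_)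
  have : 0 ≤ t * a := mul_nonneg ht ha
  positivity

theorem hasDerivAt_mul_log_add_mul {a b c t : ℝ} (ha : 0 ≤ a) (hb : 0 ≤ b) (ht : 0 < t)
    (hc : b = 0 → c = 0) :
    HasDerivAt (fun t : ℝ => c * Real.log (b + t * a)) (c * a / (b + t * a)) t := by
  rcases hb.eq_or_lt with rfl | hb
  · simpa [hc rfl] using hasDerivAt_const t (0 : ℝ)
  have h0 : b + t * a ≠ 0 := by positivity
  have h1 : HasDerivAt (fun t : ℝ => b + t * a) a t := by
    simpa using ((hasDerivAt_id t).mul_const a).const_add b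
  simpa [mul_div_assoc] using (h1.log h0).const_mul c

theorem posSemidef_sum_smul {ι κ : Type*} [Fintype κ] {w : κ → ℝ} (hw : ∀ k, 0 ≤ w k)
    {A : κ → Matrix ι ι ℂ} (hA : ∀ k, (A k).PosSemidef) : (∑ k, w k • A k).PosSemidef :=
  posSemidef_sum _ fun k _ => (hA k).smul (hw k)

section Spectral

variable {ι : Type*} [Fintype ι]

/-- The quadratic form whose supremum over `X` is `⟪A, (L_B + t R_A)⁻¹ A⟫`; for fixed `X` it is
linear in the pair `(A, B)`. -/
noncomputable def quadForm (t : ℝ) (A B X : Matrix ι ι ℂ) : ℝ :=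
  (2 * (Xᴴ * A).trace - (Xᴴ * B * X).trace - t * (Xᴴ * X * A).trace).re

theorem quadForm_sum_smul {κ : Type*} [Fintype κ] (t : ℝ) (w : κ → ℝ)
    (A B : κ → Matrix ι ι ℂ) (X : Matrix ι ι ℂ) :
    quadForm t (∑ k, w k • A k) (∑ k, w k • B k) X = ∑ k, w k * quadForm t (A k) (B k) X := by
  simp only [quadForm, Finset.mul_sum, Matrix.sum_mul, Matrix.trace_sum, Matrix.mul_smul,
    Matrix.smul_mul, Matrix.trace_smul, ← Finset.sum_sub_distrib, Complex.re_sum]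
  refine Finset.sum_congr rfl fun k _ => ?_
  simp only [Complex.sub_re, Complex.mul_re, Complex.real_smul, Complex.ofReal_re,
    Complex.ofReal_im, Complex.re_ofNat, Complex.im_ofNat]
  ring

/-- The uniform mixture of the unitary conjugations by the `V k`. -/
noncomputable def twirl {κ : Type*} [Fintype κ] (V : κ → Matrix ι ι ℂ) (A : Matrix ι ι ℂ) :
    Matrix ι ι ℂ :=
  ∑ k, (Fintype.card κ : ℝ)⁻¹ • (V k * A * (V k)ᴴ)

theorem posSemidef_twirl {κ : Type*} [Fintype κ] (V : κ → Matrix ι ι ℂ)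
    {A : Matrix ι ι ℂ} (hA : A.PosSemidef) :
    (twirl V A).PosSemidef :=
  posSemidef_sum_smul (fun _ => by positivity) fun k => hA.mul_mul_conjTranspose_same (V k)

theorem twirl_smul_sub {κ : Type*} [Fintype κ] (V : κ → Matrix ι ι ℂ) (c : ℝ)
    (A B : Matrix ι ι ℂ) :
    twirl V (c • B - A) = c • twirl V B - twirl V A := by
  simp only [twirl, Finset.smul_sum, ← Finset.sum_sub_distrib, Matrix.mul_sub, Matrix.sub_mul,
    Matrix.mul_smul, Matrix.smul_mul, smul_sub]
  simp only [smul_comm c]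

variable [DecidableEq ι]

/-- Squared moduli of the inner products of two eigenbases. -/
noncomputable def overlap {A B : Matrix ι ι ℂ} (hA : A.IsHermitian) (hB : B.IsHermitian)
    (j i : ι) : ℝ :=
  ‖((hB.eigenvectorUnitary : Matrix ι ι ℂ)ᴴ * (hA.eigenvectorUnitary : Matrix ι ι ℂ)) j i‖ ^ 2

/-- The value of `⟪A, (L_B + t R_A)⁻¹ A⟫` in terms of eigenvalues and overlaps. -/
noncomputable def resolventForm {A B : Matrix ι ι ℂ} (hA : A.IsHermitian) (hB : B.IsHermitian)
    (t : ℝ) : ℝ :=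
  ∑ j, ∑ i, overlap hA hB j i * hA.eigenvalues i * hA.eigenvalues i /
    (hB.eigenvalues j + t * hA.eigenvalues i)

/-- `Tr (A log B)`, with `log 0 = 0`. -/
noncomputable def traceLog (A B : Matrix ι ι ℂ) : ℝ :=
  (A * cfc Real.log B).trace.re

theorem eq_unitary_mul_diagonal_mul {A : Matrix ι ι ℂ} (hA : A.IsHermitian) :
    A = (hA.eigenvectorUnitary : Matrix ι ι ℂ) * diagonal (fun i => (hA.eigenvalues i : ℂ)) *
      (hA.eigenvectorUnitary : Matrix ι ι ℂ)ᴴ := by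
  conv_lhs => rw [hA.spectral_theorem]
  rfl

theorem cfc_eq_unitary_mul_diagonal_mul {A : Matrix ι ι ℂ} (hA : A.IsHermitian) (f : ℝ → ℝ) :
    cfc f A = (hA.eigenvectorUnitary : Matrix ι ι ℂ) *
      diagonal (fun i => (f (hA.eigenvalues i) : ℂ)) *
      (hA.eigenvectorUnitary : Matrix ι ι ℂ)ᴴ := by
  rw [hA.cfc_eq]
  rfl

theorem eigenvectorUnitary_conjTranspose_mul {A : Matrix ι ι ℂ} (hA : A.IsHermitian) :
    (hA.eigenvectorUnitary : Matrix ι ι ℂ)ᴴ * (hA.eigenvectorUnitary : Matrix ι ι ℂ) = 1 :=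
  Unitary.coe_star_mul_self _

theorem eigenvectorUnitary_mul_conjTranspose {A : Matrix ι ι ℂ} (hA : A.IsHermitian) :
    (hA.eigenvectorUnitary : Matrix ι ι ℂ) * (hA.eigenvectorUnitary : Matrix ι ι ℂ)ᴴ = 1 :=
  Unitary.coe_mul_star_self _

theorem trace_mul_diagonal_mul_conjTranspose (O : Matrix ι ι ℂ) (a b : ι → ℂ) :
    (O * diagonal a * Oᴴ * diagonal b).trace = ∑ j, ∑ i, ((‖O j i‖ ^ 2 : ℝ) : ℂ) * a i * b j := by
  simp only [Matrix.trace, diag_apply, mul_diagonal, mul_apply (N := Oᴴ), conjTranspose_apply,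
    Finset.sum_mul, Complex.ofReal_pow]
  refine Finset.sum_congr rfl fun j _ => Finset.sum_congr rfl fun i _ => ?_
  rw [← Complex.mul_conj', starRingEnd_apply]
  ring

theorem trace_mul_cfc {A B : Matrix ι ι ℂ} (hA : A.IsHermitian) (hB : B.IsHermitian)
    (f : ℝ → ℝ) :
    (A * cfc f B).trace =
      ((∑ j, ∑ i, overlap hA hB j i * hA.eigenvalues i * f (hB.eigenvalues j) : ℝ) : ℂ) := by
  rw [cfc_eq_unitary_mul_diagonal_mul hB]
  conv_lhs => rw [eq_unitary_mul_diagonal_mul hA]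
  rw [← Matrix.mul_assoc, Matrix.trace_mul_comm]
  have h := trace_mul_diagonal_mul_conjTranspose
    ((hB.eigenvectorUnitary : Matrix ι ι ℂ)ᴴ * (hA.eigenvectorUnitary : Matrix ι ι ℂ))
    (fun i => (hA.eigenvalues i : ℂ)) (fun i => (f (hB.eigenvalues i) : ℂ))
  rw [conjTranspose_mul, conjTranspose_conjTranspose] at h
  simp only [Matrix.mul_assoc] at h ⊢
  rw [h]
  push_cast [overlap]
  rfl

theorem sum_overlap_left {A B : Matrix ι ι ℂ} (hA : A.IsHermitian) (hB : B.IsHermitian) (i : ι) :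
    ∑ j, overlap hA hB j i = 1 := by
  have h : ((((hB.eigenvectorUnitary : Matrix ι ι ℂ)ᴴ *
      (hA.eigenvectorUnitary : Matrix ι ι ℂ))ᴴ * ((hB.eigenvectorUnitary : Matrix ι ι ℂ)ᴴ *
      (hA.eigenvectorUnitary : Matrix ι ι ℂ))) i i) = 1 := by
    rw [conjTranspose_mul, conjTranspose_conjTranspose, Matrix.mul_assoc,
      ← Matrix.mul_assoc _ _ (hA.eigenvectorUnitary : Matrix ι ι ℂ),
      eigenvectorUnitary_mul_conjTranspose, Matrix.one_mul, eigenvectorUnitary_conjTranspose_mul,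
      one_apply_eq]
  rw [mul_apply] at h
  simp only [conjTranspose_apply, ← starRingEnd_apply, Complex.conj_mul'] at h
  exact_mod_cast h

theorem overlap_nonneg {A B : Matrix ι ι ℂ} (hA : A.IsHermitian) (hB : B.IsHermitian) (j i : ι) :
    0 ≤ overlap hA hB j i := sq_nonneg _

theorem quadForm_unitary_mul {A B : Matrix ι ι ℂ} (hA : A.IsHermitian) (hB : B.IsHermitian)
    (t : ℝ) (Y : Matrix ι ι ℂ) :
    quadForm t A B ((hB.eigenvectorUnitary : Matrix ι ι ℂ) * Y *
        (hA.eigenvectorUnitary : Matrix ι ι ℂ)ᴴ) =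
      ∑ j, ∑ i, (2 * hA.eigenvalues i * (star (Y j i) *
        ((hB.eigenvectorUnitary : Matrix ι ι ℂ)ᴴ *
          (hA.eigenvectorUnitary : Matrix ι ι ℂ)) j i).re -
        (hB.eigenvalues j + t * hA.eigenvalues i) * ‖Y j i‖ ^ 2) := by
  have eA := eq_unitary_mul_diagonal_mul hA
  have eB := eq_unitary_mul_diagonal_mul hB
  have uA := eigenvectorUnitary_conjTranspose_mul hA
  have uB := eigenvectorUnitary_conjTranspose_mul hB
  set U := (hA.eigenvectorUnitary : Matrix ι ι ℂ)
  set V := (hB.eigenvectorUnitary : Matrix ι ι ℂ)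
  set a := hA.eigenvalues
  set b := hB.eigenvalues
  have h1 : ((V * Y * Uᴴ)ᴴ * A).trace =
      ∑ j, ∑ i, (a i : ℂ) * (star (Y j i) * (Vᴴ * U) j i) := by
    have : ((V * Y * Uᴴ)ᴴ * A).trace = (Yᴴ * ((Vᴴ * U) * diagonal (fun i => (a i : ℂ)))).trace := by
      conv_lhs => rw [eA]
      simp only [conjTranspose_mul, conjTranspose_conjTranspose]
      rw [Matrix.mul_assoc, Matrix.trace_mul_comm]
      simp only [Matrix.mul_assoc, uA, Matrix.mul_one]
    rw [this, Finset.sum_comm]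
    simp only [Matrix.trace, diag_apply, mul_apply (M := Yᴴ), mul_diagonal, conjTranspose_apply]
    refine Finset.sum_congr rfl fun j _ => Finset.sum_congr rfl fun i _ => ?_
    ring
  have h2 : ((V * Y * Uᴴ)ᴴ * B * (V * Y * Uᴴ)).trace =
      ∑ j, ∑ i, ((b j * ‖Y j i‖ ^ 2 : ℝ) : ℂ) := by
    have : ((V * Y * Uᴴ)ᴴ * B * (V * Y * Uᴴ)).trace =
        (Yᴴ * (diagonal (fun i => (b i : ℂ)) * Y)).trace := by
      conv_lhs => rw [eB]
      simp only [conjTranspose_mul, conjTranspose_conjTranspose]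
      rw [Matrix.mul_assoc, Matrix.mul_assoc, Matrix.trace_mul_comm]
      simp only [Matrix.mul_assoc, uA, Matrix.mul_one]
      simp only [← Matrix.mul_assoc Vᴴ V, uB, Matrix.one_mul]
    rw [this, Finset.sum_comm]
    simp only [Matrix.trace, diag_apply, mul_apply (M := Yᴴ), diagonal_mul, conjTranspose_apply]
    refine Finset.sum_congr rfl fun j _ => Finset.sum_congr rfl fun i _ => ?_
    push_cast
    rw [← Complex.mul_conj', starRingEnd_apply]
    ring
  have h3 : ((V * Y * Uᴴ)ᴴ * (V * Y * Uᴴ) * A).trace =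
      ∑ j, ∑ i, ((a i * ‖Y j i‖ ^ 2 : ℝ) : ℂ) := by
    have : ((V * Y * Uᴴ)ᴴ * (V * Y * Uᴴ) * A).trace =
        (Yᴴ * (Y * diagonal (fun i => (a i : ℂ)))).trace := by
      conv_lhs => rw [eA]
      simp only [conjTranspose_mul, conjTranspose_conjTranspose]
      rw [Matrix.mul_assoc, Matrix.mul_assoc, Matrix.trace_mul_comm]
      simp only [Matrix.mul_assoc, uA, Matrix.mul_one]
      simp only [← Matrix.mul_assoc Vᴴ V, uB, Matrix.one_mul]
      simp only [← Matrix.mul_assoc Uᴴ U, uA, Matrix.one_mul]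
    rw [this, Finset.sum_comm]
    simp only [Matrix.trace, diag_apply, mul_apply (M := Yᴴ), mul_diagonal, conjTranspose_apply]
    refine Finset.sum_congr rfl fun j _ => Finset.sum_congr rfl fun i _ => ?_
    push_cast
    rw [← Complex.mul_conj', starRingEnd_apply]
    ring
  rw [quadForm, h1, h2, h3]
  simp only [Complex.sub_re, Complex.mul_re, Complex.re_sum, Complex.ofReal_re,
    Complex.ofReal_im, mul_zero, sub_zero, Complex.re_ofNat,
    Complex.im_ofNat, zero_mul, Finset.mul_sum, ← Finset.sum_sub_distrib]
  refine Finset.sum_congr rfl fun j _ => Finset.sum_congr rfl fun i _ => ?_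
  ring

theorem quadForm_le_resolventForm {A B : Matrix ι ι ℂ} (hA : A.PosSemidef) (hB : B.PosSemidef)
    {t : ℝ} (ht : 0 < t) (X : Matrix ι ι ℂ) :
    quadForm t A B X ≤ resolventForm hA.1 hB.1 t := by
  have hX : X = (hB.1.eigenvectorUnitary : Matrix ι ι ℂ) *
      ((hB.1.eigenvectorUnitary : Matrix ι ι ℂ)ᴴ * X * (hA.1.eigenvectorUnitary : Matrix ι ι ℂ)) *
        (hA.1.eigenvectorUnitary : Matrix ι ι ℂ)ᴴ := by
    rw [Matrix.mul_assoc, Matrix.mul_assoc _ _ (hA.1.eigenvectorUnitary : Matrix ι ι ℂ)ᴴ,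
      eigenvectorUnitary_mul_conjTranspose, Matrix.mul_one, ← Matrix.mul_assoc,
      eigenvectorUnitary_mul_conjTranspose, Matrix.one_mul]
  rw [hX, quadForm_unitary_mul hA.1 hB.1, resolventForm]
  refine Finset.sum_le_sum fun j _ => Finset.sum_le_sum fun i _ => ?_
  have ha := hA.eigenvalues_nonneg i
  have hb := hB.eigenvalues_nonneg j
  rw [overlap]
  set y := ((hB.1.eigenvectorUnitary : Matrix ι ι ℂ)ᴴ * X *
    (hA.1.eigenvectorUnitary : Matrix ι ι ℂ)) j i
  set o := ((hB.1.eigenvectorUnitary : Matrix ι ι ℂ)ᴴ *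
    (hA.1.eigenvectorUnitary : Matrix ι ι ℂ)) j i
  set a := hA.1.eigenvalues i
  set b := hB.1.eigenvalues j
  have hre : (star y * o).re ≤ ‖y‖ * ‖o‖ := by
    simpa using Complex.re_le_norm (star y * o)
  have hta : 0 ≤ t * a := mul_nonneg ht.le ha
  rcases (add_nonneg hb hta).eq_or_lt with h0 | h0
  · have : a = 0 := by
      have : t * a = 0 := by linarith
      simpa [ht.ne'] using this
    rw [← h0]
    simp [this]
  · rw [le_div_iff₀ h0]
    have h1 : 2 * a * (star y * o).re ≤ 2 * a * (‖y‖ * ‖o‖) := by gcongr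
    nlinarith [sq_nonneg ((b + t * a) * ‖y‖ - a * ‖o‖),
      mul_le_mul_of_nonneg_right h1 h0.le]

theorem exists_quadForm_eq_resolventForm {A B : Matrix ι ι ℂ} (hA : A.PosSemidef)
    (hB : B.PosSemidef) {t : ℝ} (ht : 0 < t) :
    ∃ X, quadForm t A B X = resolventForm hA.1 hB.1 t := by
  refine ⟨_, (quadForm_unitary_mul hA.1 hB.1 t (Matrix.of fun j i =>
    ((hA.1.eigenvalues i / (hB.1.eigenvalues j + t * hA.1.eigenvalues i) : ℝ) : ℂ) *
    ((hB.1.eigenvectorUnitary : Matrix ι ι ℂ)ᴴ *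
      (hA.1.eigenvectorUnitary : Matrix ι ι ℂ)) j i)).trans ?_⟩
  rw [resolventForm]
  refine Finset.sum_congr rfl fun j _ => Finset.sum_congr rfl fun i _ => ?_
  have ha := hA.eigenvalues_nonneg i
  have hb := hB.eigenvalues_nonneg j
  rw [overlap, of_apply]
  set o := ((hB.1.eigenvectorUnitary : Matrix ι ι ℂ)ᴴ *
    (hA.1.eigenvectorUnitary : Matrix ι ι ℂ)) j i
  set a := hA.1.eigenvalues i
  set b := hB.1.eigenvalues j
  have hre : ∀ r : ℝ, (star ((r : ℂ) * o) * o).re = r * ‖o‖ ^ 2 := by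
    intro r
    rw [star_mul', mul_assoc, ← starRingEnd_apply, ← starRingEnd_apply, Complex.conj_mul',
      Complex.conj_ofReal]
    norm_cast
  have hta : 0 ≤ t * a := mul_nonneg ht.le ha
  rw [hre, norm_mul, mul_pow, Complex.norm_real, Real.norm_eq_abs, sq_abs]
  rcases (add_nonneg hb hta).eq_or_lt with h0 | h0
  · simp [← h0]
  · field_simp
    ring

/-- `traceLog` along the segment `B + t A`, computed formally in the eigenbases of `A` and `B`. -/
noncomputable def logPath {A B : Matrix ι ι ℂ} (hA : A.IsHermitian) (hB : B.IsHermitian)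
    (t : ℝ) : ℝ :=
  ∑ j, ∑ i, overlap hA hB j i * hA.eigenvalues i *
    Real.log (hB.eigenvalues j + t * hA.eigenvalues i)

theorem vnEntropy_eq {A : Matrix ι ι ℂ} (hA : A.IsHermitian) :
    vnEntropy A = -∑ i, hA.eigenvalues i * Real.log (hA.eigenvalues i) := dif_pos hA

theorem logPath_zero {A B : Matrix ι ι ℂ} (hA : A.IsHermitian) (hB : B.IsHermitian) :
    logPath hA hB 0 = traceLog A B := by
  rw [traceLog, trace_mul_cfc hA hB, Complex.ofReal_re]
  simp [logPath]

theorem overlap_mul_eq_zero {A B : Matrix ι ι ℂ} (hA : A.PosSemidef) (hB : B.PosSemidef)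
    (hAB : ∃ c : ℝ, (c • B - A).PosSemidef) {j : ι} (hj : hB.1.eigenvalues j = 0) (i : ι) :
    overlap hA.1 hB.1 j i * hA.1.eigenvalues i = 0 := by
  obtain ⟨c, hc⟩ := hAB
  have eA := eq_unitary_mul_diagonal_mul hA.1
  have eB := eq_unitary_mul_diagonal_mul hB.1
  have uB := eigenvectorUnitary_conjTranspose_mul hB.1
  set V := (hB.1.eigenvectorUnitary : Matrix ι ι ℂ) with hV
  set U := (hA.1.eigenvectorUnitary : Matrix ι ι ℂ) with hU
  have h1 : (Vᴴ * B * V) j j = 0 := by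
    rw [eB, Matrix.mul_assoc, Matrix.mul_assoc, Matrix.mul_assoc, uB, Matrix.mul_one,
      ← Matrix.mul_assoc, uB, Matrix.one_mul, diagonal_apply_eq, hj, Complex.ofReal_zero]
  have h2 : (Vᴴ * A * V) j j =
      ((∑ i, overlap hA.1 hB.1 j i * hA.1.eigenvalues i : ℝ) : ℂ) := by
    have : Vᴴ * A * V = (Vᴴ * U) * diagonal (fun i => (hA.1.eigenvalues i : ℂ)) * (Vᴴ * U)ᴴ := by
      conv_lhs => rw [eA]
      simp only [conjTranspose_mul, conjTranspose_conjTranspose, Matrix.mul_assoc]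
    rw [this]
    simp only [mul_apply (N := (Vᴴ * U)ᴴ), mul_diagonal, conjTranspose_apply]
    push_cast [overlap]
    refine Finset.sum_congr rfl fun i _ => ?_
    rw [← hU, ← hV, ← Complex.mul_conj', starRingEnd_apply]
    ring
  have h3 : 0 ≤ (Vᴴ * (c • B - A) * V) j j := (hc.conjTranspose_mul_mul_same V).diag_nonneg
  rw [Matrix.mul_sub, Matrix.sub_mul, Matrix.mul_smul, Matrix.smul_mul, Matrix.sub_apply,
    Matrix.smul_apply, h1, h2, smul_zero, zero_sub, ← Complex.ofReal_neg] at h3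
  have h4 : 0 ≤ -∑ i, overlap hA.1 hB.1 j i * hA.1.eigenvalues i := by exact_mod_cast h3
  have h5 : ∀ i ∈ Finset.univ, 0 ≤ overlap hA.1 hB.1 j i * hA.1.eigenvalues i := fun i _ =>
    mul_nonneg (overlap_nonneg _ _ _ _) (hA.eigenvalues_nonneg i)
  exact (Finset.sum_eq_zero_iff_of_nonneg h5).1
    (le_antisymm (by linarith) (Finset.sum_nonneg h5)) i (Finset.mem_univ i)

theorem continuousOn_logPath {A B : Matrix ι ι ℂ} (hA : A.PosSemidef) (hB : B.PosSemidef)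
    (hAB : ∃ c : ℝ, (c • B - A).PosSemidef) :
    ContinuousOn (logPath hA.1 hB.1) (Set.Ici 0) :=
  continuousOn_finsetSum _ fun j _ => continuousOn_finsetSum _ fun i _ =>
    continuousOn_mul_log_add_mul (hA.eigenvalues_nonneg i) (hB.eigenvalues_nonneg j)
      fun hj => overlap_mul_eq_zero hA hB hAB hj i

theorem hasDerivAt_logPath {A B : Matrix ι ι ℂ} (hA : A.PosSemidef) (hB : B.PosSemidef)
    (hAB : ∃ c : ℝ, (c • B - A).PosSemidef) {t : ℝ} (ht : 0 < t) :
    HasDerivAt (logPath hA.1 hB.1) (resolventForm hA.1 hB.1 t) t :=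
  HasDerivAt.fun_sum fun j _ => HasDerivAt.fun_sum fun i _ =>
    hasDerivAt_mul_log_add_mul (hA.eigenvalues_nonneg i) (hB.eigenvalues_nonneg j) ht
      fun hj => overlap_mul_eq_zero hA hB hAB hj i

open Filter Topology in
theorem tendsto_logPath {A B : Matrix ι ι ℂ} (hA : A.PosSemidef) (hB : B.PosSemidef) :
    Tendsto (fun t => logPath hA.1 hB.1 t - A.trace.re * Real.log t) atTop
      (𝓝 (-vnEntropy A)) := by
  have h1 : -vnEntropy A = ∑ i, ∑ j, overlap hA.1 hB.1 j i *
      (hA.1.eigenvalues i * Real.log (hA.1.eigenvalues i)) := by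
    simp only [← Finset.sum_mul, sum_overlap_left, one_mul, vnEntropy_eq hA.1, neg_neg]
  have h2 : A.trace.re = ∑ i, ∑ j, overlap hA.1 hB.1 j i * hA.1.eigenvalues i := by
    simp only [← Finset.sum_mul, sum_overlap_left, one_mul, hA.1.trace_eq_sum_eigenvalues]
    simp
  rw [h1]
  refine Tendsto.congr (f₁ := fun t => ∑ i, ∑ j, overlap hA.1 hB.1 j i *
    (hA.1.eigenvalues i * Real.log (hB.1.eigenvalues j + t * hA.1.eigenvalues i) -
      hA.1.eigenvalues i * Real.log t)) (fun t => ?_) ?_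
  · rw [h2, show logPath hA.1 hB.1 t = _ from Finset.sum_comm]
    simp only [Finset.sum_mul, ← Finset.sum_sub_distrib]
    refine Finset.sum_congr rfl fun j _ => Finset.sum_congr rfl fun i _ => ?_
    ring
  · exact tendsto_finsetSum _ fun i _ => tendsto_finsetSum _ fun j _ =>
      (tendsto_mul_log_add_mul_sub (hA.eigenvalues_nonneg i)).const_mul _

theorem resolventForm_sum_smul_le {κ : Type*} [Fintype κ] {w : κ → ℝ} (hw : ∀ k, 0 ≤ w k)
    {A B : κ → Matrix ι ι ℂ} (hA : ∀ k, (A k).PosSemidef) (hB : ∀ k, (B k).PosSemidef)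
    {t : ℝ} (ht : 0 < t) :
    resolventForm (posSemidef_sum_smul hw hA).1 (posSemidef_sum_smul hw hB).1 t ≤
      ∑ k, w k * resolventForm (hA k).1 (hB k).1 t := by
  obtain ⟨X, hX⟩ := exists_quadForm_eq_resolventForm (posSemidef_sum_smul hw hA)
    (posSemidef_sum_smul hw hB) ht
  rw [← hX, quadForm_sum_smul]
  exact Finset.sum_le_sum fun k _ =>
    mul_le_mul_of_nonneg_left (quadForm_le_resolventForm (hA k) (hB k) ht X) (hw k)

open Filter Topology in
/-- Joint convexity of the quantum relative entropy `-S(A) - Tr (A log B)`. -/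
theorem sum_vnEntropy_add_traceLog_le {κ : Type*} [Fintype κ] {w : κ → ℝ} (hw : ∀ k, 0 ≤ w k)
    {A B : κ → Matrix ι ι ℂ} (hA : ∀ k, (A k).PosSemidef) (hB : ∀ k, (B k).PosSemidef)
    (hAB : ∀ k, ∃ c : ℝ, (c • B k - A k).PosSemidef)
    (hsum : ∃ c : ℝ, (c • (∑ k, w k • B k) - ∑ k, w k • A k).PosSemidef) :
    ∑ k, w k * (vnEntropy (A k) + traceLog (A k) (B k)) ≤
      vnEntropy (∑ k, w k • A k) + traceLog (∑ k, w k • A k) (∑ k, w k • B k) := by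
  have hA' := posSemidef_sum_smul hw hA
  have hB' := posSemidef_sum_smul hw hB
  let g : ℝ → ℝ := fun t => ∑ k, w k * logPath (hA k).1 (hB k).1 t - logPath hA'.1 hB'.1 t
  have hmono : MonotoneOn g (Set.Ici 0) := by
    refine monotoneOn_of_hasDerivWithinAt_nonneg (convex_Ici 0)
      (f' := fun t => ∑ k, w k * resolventForm (hA k).1 (hB k).1 t - resolventForm hA'.1 hB'.1 t)
      ?_ ?_ ?_
    · exact (continuousOn_finsetSum _ fun k _ => continuousOn_const.mul
        (continuousOn_logPath (hA k) (hB k) (hAB k))).sub (continuousOn_logPath hA' hB' hsum)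
    · intro t ht
      rw [interior_Ici] at ht
      exact ((HasDerivAt.fun_sum fun k _ =>
        (hasDerivAt_logPath (hA k) (hB k) (hAB k) ht).const_mul (w k)).sub
        (hasDerivAt_logPath hA' hB' hsum ht)).hasDerivWithinAt
    · intro t ht
      rw [interior_Ici] at ht
      exact sub_nonneg.2 (resolventForm_sum_smul_le hw hA hB ht)
  have htr : (∑ k, w k • A k).trace.re = ∑ k, w k * (A k).trace.re := by
    simp [Matrix.trace_sum, Matrix.trace_smul]
  have hlim : Tendsto g atTop
      (𝓝 (∑ k, w k * -vnEntropy (A k) - -vnEntropy (∑ k, w k • A k))) := by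
    refine ((tendsto_finsetSum _ fun k _ => (tendsto_logPath (hA k) (hB k)).const_mul (w k)).sub
      (tendsto_logPath hA' hB')).congr fun t => ?_
    simp only [htr, g, mul_sub, Finset.sum_sub_distrib, Finset.sum_mul, mul_assoc]
    ring
  have h := ge_of_tendsto hlim ((eventually_ge_atTop 0).mono fun t ht =>
    hmono Set.self_mem_Ici ht ht)
  simp only [g, logPath_zero, mul_neg, Finset.sum_neg_distrib] at h
  simp only [mul_add, Finset.sum_add_distrib]
  linarith

theorem traceLog_self {A : Matrix ι ι ℂ} (hA : A.IsHermitian) :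
    traceLog A A = -vnEntropy A := by
  have uA := eigenvectorUnitary_conjTranspose_mul hA
  rw [traceLog, cfc_eq_unitary_mul_diagonal_mul hA]
  conv_lhs => enter [1, 1, 1]; rw [eq_unitary_mul_diagonal_mul hA]
  rw [← Matrix.mul_assoc, Matrix.trace_mul_comm]
  simp only [Matrix.mul_assoc]
  simp only [← Matrix.mul_assoc (_ᴴ) _, uA, Matrix.one_mul, diagonal_mul_diagonal,
    trace_diagonal, vnEntropy_eq hA, neg_neg]
  simp

theorem traceLog_one (A : Matrix ι ι ℂ) : traceLog A 1 = 0 := by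
  simp [traceLog]

theorem traceLog_sum_smul_left {κ : Type*} [Fintype κ] (w : κ → ℝ) (A : κ → Matrix ι ι ℂ)
    (B : Matrix ι ι ℂ) : traceLog (∑ k, w k • A k) B = ∑ k, w k * traceLog (A k) B := by
  simp [traceLog, Matrix.sum_mul, Matrix.trace_sum, Matrix.trace_smul]

theorem exists_smul_one_sub_posSemidef {A : Matrix ι ι ℂ} (hA : A.PosSemidef) :
    ∃ c : ℝ, (c • (1 : Matrix ι ι ℂ) - A).PosSemidef := by
  refine ⟨∑ i, hA.1.eigenvalues i, ?_⟩
  have h : ((∑ i, hA.1.eigenvalues i) • (1 : Matrix ι ι ℂ) - A) =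
      (hA.1.eigenvectorUnitary : Matrix ι ι ℂ) *
      diagonal (fun j => ((∑ i, hA.1.eigenvalues i - hA.1.eigenvalues j : ℝ) : ℂ)) *
      (hA.1.eigenvectorUnitary : Matrix ι ι ℂ)ᴴ := by
    have hd : diagonal (fun j => ((∑ i, hA.1.eigenvalues i - hA.1.eigenvalues j : ℝ) : ℂ)) =
        (∑ i, hA.1.eigenvalues i) • (1 : Matrix ι ι ℂ) -
          diagonal (fun j => (hA.1.eigenvalues j : ℂ)) := by
      ext i j
      by_cases hij : i = j <;> simp [hij]
    rw [hd, Matrix.mul_sub, Matrix.sub_mul, ← eq_unitary_mul_diagonal_mul, Matrix.mul_smul,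
      Matrix.smul_mul, Matrix.mul_one, eigenvectorUnitary_mul_conjTranspose]
  rw [h]
  refine (PosSemidef.diagonal fun j => ?_).mul_mul_conjTranspose_same _
  have := Finset.single_le_sum (fun i _ => hA.eigenvalues_nonneg i) (Finset.mem_univ j)
  simpa only [Pi.zero_apply, Complex.zero_le_real, sub_nonneg] using this

/-- Concavity of the von Neumann entropy. -/
theorem vnEntropy_concave {A B : Matrix ι ι ℂ} (hA : A.PosSemidef) (hB : B.PosSemidef)
    {p : ℝ} (hp0 : 0 ≤ p) (hp1 : p ≤ 1) :
    (1 - p) * vnEntropy A + p * vnEntropy B ≤ vnEntropy ((1 - p) • A + p • B) := by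
  have hw : ∀ k : Bool, 0 ≤ cond k (1 - p) p := by
    rintro (_ | _) <;> simp [hp0, hp1]
  have hM : ∀ k : Bool, (cond k A B).PosSemidef := by
    rintro (_ | _)
    exacts [hB, hA]
  have h1 : ∑ k : Bool, cond k (1 - p) p • (1 : Matrix ι ι ℂ) = 1 := by
    rw [← Finset.sum_smul]
    simp
  have h := sum_vnEntropy_add_traceLog_le hw hM (B := fun _ => 1) (fun _ => .one)
    (fun k => exists_smul_one_sub_posSemidef (hM k))
    (by rw [h1]; exact exists_smul_one_sub_posSemidef (posSemidef_sum_smul hw hM))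
  rw [h1, traceLog_one] at h
  simpa [traceLog_one] using h

theorem vnEntropy_unitary_conj {V A : Matrix ι ι ℂ} (hV : V ∈ unitaryGroup ι ℂ)
    (hA : A.IsHermitian) : vnEntropy (V * A * Vᴴ) = vnEntropy A := by
  have hV' : Vᴴ * V = 1 := mem_unitaryGroup_iff'.1 hV
  have hVA : (V * A * Vᴴ).IsHermitian := isHermitian_mul_mul_conjTranspose V hA
  have h : hVA.eigenvalues = hA.eigenvalues := by
    rw [hVA.eigenvalues_eq_eigenvalues_iff hA, Matrix.mul_assoc, charpoly_mul_comm,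
      Matrix.mul_assoc, hV', Matrix.mul_one]
  rw [vnEntropy_eq hVA, vnEntropy_eq hA, h]

theorem cfc_unitary_conj {V B : Matrix ι ι ℂ} (hV : V ∈ unitaryGroup ι ℂ)
    (hB : B.IsHermitian) (f : ℝ → ℝ) : cfc f (V * B * Vᴴ) = V * cfc f B * Vᴴ := by
  have hVB : (V * B * Vᴴ).IsHermitian := isHermitian_mul_mul_conjTranspose V hB
  have hf : ContinuousOn f (spectrum ℝ B) := finite_real_spectrum.continuousOn f
  have hc : Continuous (Unitary.conjStarAlgAut ℝ (Matrix ι ι ℂ) ⟨V, hV⟩) := by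
    change Continuous fun X : Matrix ι ι ℂ => V * X * star V
    fun_prop
  exact (StarAlgHomClass.map_cfc (S := ℝ) (p := IsSelfAdjoint) (q := IsSelfAdjoint)
    (Unitary.conjStarAlgAut ℝ (Matrix ι ι ℂ) ⟨V, hV⟩) f B hf hc hB hVB).symm

theorem traceLog_unitary_conj {V A B : Matrix ι ι ℂ} (hV : V ∈ unitaryGroup ι ℂ)
    (hB : B.IsHermitian) : traceLog (V * A * Vᴴ) (V * B * Vᴴ) = traceLog A B := by
  have hV' : Vᴴ * V = 1 := mem_unitaryGroup_iff'.1 hV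
  rw [traceLog, traceLog, cfc_unitary_conj hV hB, ← Matrix.mul_assoc, Matrix.trace_mul_comm]
  simp only [Matrix.mul_assoc]
  simp only [← Matrix.mul_assoc Vᴴ V, hV', Matrix.one_mul]

section Twirl

variable {κ : Type*} [Fintype κ] {V : κ → Matrix ι ι ℂ}

theorem sum_card_inv_mul [Nonempty κ] (x : ℝ) : ∑ _k : κ, (Fintype.card κ : ℝ)⁻¹ * x = x := by
  simp

theorem trace_twirl [Nonempty κ] (hV : ∀ k, V k ∈ unitaryGroup ι ℂ) (A : Matrix ι ι ℂ) :
    (twirl V A).trace = A.trace := by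
  have h : ∀ k, (V k * A * (V k)ᴴ).trace = A.trace := fun k => by
    rw [Matrix.trace_mul_comm, ← Matrix.mul_assoc,
      show (V k)ᴴ * V k = 1 from mem_unitaryGroup_iff'.1 (hV k), Matrix.one_mul]
  simp [twirl, Matrix.trace_sum, Matrix.trace_smul, h]

/-- Monotonicity of the relative entropy under mixtures of unitary conjugations. -/
theorem vnEntropy_add_traceLog_le_twirl [Nonempty κ] (hV : ∀ k, V k ∈ unitaryGroup ι ℂ)
    {A B : Matrix ι ι ℂ} (hA : A.PosSemidef) (hB : B.PosSemidef)
    (hAB : ∃ c : ℝ, (c • B - A).PosSemidef) :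
    vnEntropy A + traceLog A B ≤ vnEntropy (twirl V A) + traceLog (twirl V A) (twirl V B) := by
  obtain ⟨c, hc⟩ := hAB
  have h := sum_vnEntropy_add_traceLog_le (κ := κ) (w := fun _ => (Fintype.card κ : ℝ)⁻¹)
    (fun _ => by positivity) (fun k => hA.mul_mul_conjTranspose_same (V k))
    (fun k => hB.mul_mul_conjTranspose_same (V k))
    (fun k => ⟨c, by
      simpa [Matrix.mul_sub, Matrix.sub_mul] using hc.mul_mul_conjTranspose_same (V k)⟩)
    ⟨c, (twirl_smul_sub V c A B).subst (motive := PosSemidef) (posSemidef_twirl V hc)⟩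
  simp only [vnEntropy_unitary_conj (hV _) hA.1, traceLog_unitary_conj (hV _) hB.1] at h
  rwa [sum_card_inv_mul] at h

theorem traceLog_twirl_left [Nonempty κ] (hV : ∀ k, V k ∈ unitaryGroup ι ℂ)
    {A B : Matrix ι ι ℂ} (hB : B.IsHermitian) (hinv : ∀ k, V k * B * (V k)ᴴ = B) :
    traceLog (twirl V A) B = traceLog A B := by
  have h : ∀ k, traceLog (V k * A * (V k)ᴴ) B = traceLog A B := fun k => by
    conv_lhs => rw [← hinv k]
    exact traceLog_unitary_conj (hV k) hB
  rw [twirl, traceLog_sum_smul_left]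
  simp only [h, sum_card_inv_mul]

theorem traceLog_twirl [Nonempty κ] (hV : ∀ k, V k ∈ unitaryGroup ι ℂ)
    {A : Matrix ι ι ℂ} (hA : A.PosSemidef) (hinv : ∀ k, V k * twirl V A * (V k)ᴴ = twirl V A) :
    traceLog A (twirl V A) = -vnEntropy (twirl V A) := by
  rw [← traceLog_twirl_left hV (posSemidef_twirl V hA).1 hinv,
    traceLog_self (posSemidef_twirl V hA).1]

theorem exists_smul_twirl_sub_posSemidef {k₀ : κ} (hk₀ : V k₀ = 1)
    {A : Matrix ι ι ℂ} (hA : A.PosSemidef) :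
    ∃ c : ℝ, (c • twirl V A - A).PosSemidef := by
  classical
  have : Nonempty κ := ⟨k₀⟩
  refine ⟨Fintype.card κ, ?_⟩
  have h : (Fintype.card κ : ℝ) • twirl V A - A =
      ∑ k ∈ Finset.univ.erase k₀, V k * A * (V k)ᴴ := by
    rw [twirl, ← Finset.smul_sum, smul_inv_smul₀ (by simp),
      ← Finset.add_sum_erase _ _ (Finset.mem_univ k₀), hk₀]
    simp
  rw [h]
  exact posSemidef_sum _ fun k _ => hA.mul_mul_conjTranspose_same (V k)

end Twirl

end Spectral

section Depolarizing

variable {n : ℕ}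

/-- The character `(-1)^(b x)` of `Fin 2`. -/
def bitSign (b x : Fin 2) : ℝ := if b = 1 ∧ x = 1 then -1 else 1

/-- The product of the characters `bitSign (b i)` over the qubits `i ∈ S`. -/
def phase (S : Finset (Fin n)) (b x : Fin n → Fin 2) : ℝ :=
  ∏ i, if i ∈ S then bitSign (b i) (x i) else 1

/-- The bit string `a` restricted to `S`. -/
def mask (S : Finset (Fin n)) (a : Fin n → Fin 2) : Fin n → Fin 2 := S.piecewise a 0

/-- The Pauli operators supported on the qubits in `S`. -/
def pauli (S : Finset (Fin n)) (k : (Fin n → Fin 2) × (Fin n → Fin 2)) :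
    Matrix (Fin n → Fin 2) (Fin n → Fin 2) ℂ :=
  Matrix.of fun x y => if x + mask S k.1 = y then (phase S k.2 x : ℂ) else 0

theorem bitSign_mul_self (b x : Fin 2) : bitSign b x * bitSign b x = 1 := by
  unfold bitSign; split_ifs <;> norm_num

theorem phase_mul_self (S : Finset (Fin n)) (b x : Fin n → Fin 2) :
    phase S b x * phase S b x = 1 := by
  rw [phase, ← Finset.prod_mul_distrib]
  refine Finset.prod_eq_one fun i _ => ?_
  split_ifs
  exacts [bitSign_mul_self _ _, one_mul 1]

theorem phase_congr {S : Finset (Fin n)} (b : Fin n → Fin 2) {x y : Fin n → Fin 2}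
    (h : ∀ i ∈ S, x i = y i) : phase S b x = phase S b y :=
  Finset.prod_congr rfl fun i _ => by
    by_cases hi : i ∈ S <;> simp [hi, h]

theorem pauli_mul_mul_apply (S : Finset (Fin n)) (k : (Fin n → Fin 2) × (Fin n → Fin 2))
    (ρ : Matrix (Fin n → Fin 2) (Fin n → Fin 2) ℂ) (x y : Fin n → Fin 2) :
    (pauli S k * ρ * (pauli S k)ᴴ) x y =
      ((phase S k.2 x * phase S k.2 y : ℝ) : ℂ) * ρ (x + mask S k.1) (y + mask S k.1) := by
  simp only [pauli, mul_apply, of_apply, conjTranspose_apply, ite_mul, zero_mul,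
    Finset.sum_ite_eq, Finset.mem_univ, if_true, apply_ite star, mul_ite, ← starRingEnd_apply,
    Complex.conj_ofReal, map_zero, mul_zero]
  push_cast
  ring

theorem pauli_mem_unitaryGroup (S : Finset (Fin n)) (k : (Fin n → Fin 2) × (Fin n → Fin 2)) :
    pauli S k ∈ unitaryGroup (Fin n → Fin 2) ℂ := by
  rw [mem_unitaryGroup_iff, star_eq_conjTranspose]
  ext x y
  have h := pauli_mul_mul_apply S k 1 x y
  rw [Matrix.mul_one] at h
  rw [h]
  by_cases hxy : x = y
  · rw [hxy, phase_mul_self, one_apply_eq, one_apply_eq, Complex.ofReal_one, one_mul]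
  · simp [hxy]

theorem pauli_zero (S : Finset (Fin n)) : pauli S 0 = 1 := by
  have h1 : mask S 0 = 0 := S.piecewise_same 0
  have h2 : ∀ x, phase S 0 x = 1 := fun x => Finset.prod_eq_one fun i _ => by simp [bitSign]
  ext x y
  simp [pauli, h1, h2, Matrix.one_apply]

theorem sum_phase_mul_phase (S : Finset (Fin n)) (x y : Fin n → Fin 2) :
    ∑ b, phase S b x * phase S b y = if ∀ i ∈ S, x i = y i then 2 ^ n else 0 := by
  have h : ∑ b, phase S b x * phase S b y =
      ∏ i, ∑ c : Fin 2, if i ∈ S then bitSign c (x i) * bitSign c (y i) else 1 := by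
    rw [Fintype.prod_sum]
    refine Finset.sum_congr rfl fun b _ => ?_
    rw [phase, phase, ← Finset.prod_mul_distrib]
    refine Finset.prod_congr rfl fun i _ => ?_
    split_ifs <;> simp
  rw [h]
  split_ifs with hS
  · rw [Finset.prod_eq_pow_card (b := 2) fun i _ => ?_]
    · simp
    · by_cases hi : i ∈ S
      · simp [hi, hS i hi, bitSign_mul_self]
      · simp [hi]
  · push Not at hS
    obtain ⟨i, hi, hxy⟩ := hS
    refine Finset.prod_eq_zero (Finset.mem_univ i) ?_
    generalize x i = u at hxy
    generalize y i = v at hxy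
    fin_cases u <;> fin_cases v <;> simp_all [bitSign]

theorem piecewise_add_eq {S : Finset (Fin n)} (a x y : Fin n → Fin 2)
    (h : ∀ i ∈ S, x i = y i) : S.piecewise (x + a) y = y + mask S a := by
  ext i
  by_cases hi : i ∈ S <;> simp [mask, hi, h]

theorem depolSet_apply (S : Finset (Fin n)) (ρ : Matrix (Fin n → Fin 2) (Fin n → Fin 2) ℂ)
    (x y : Fin n → Fin 2) :
    depolSet S ρ x y = if ∀ i ∈ S, x i = y i then
      ((2 : ℂ) ^ n)⁻¹ * ∑ z, ρ (S.piecewise z x) (S.piecewise z y) else 0 := by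
  have h : S.card ≤ n := by simpa using S.card_le_univ
  rw [depolSet, of_apply, ← mul_assoc, ← mul_inv, ← pow_add, Nat.add_sub_cancel' h]

theorem depolSet_eq_twirl (S : Finset (Fin n)) (ρ : Matrix (Fin n → Fin 2) (Fin n → Fin 2) ℂ) :
    depolSet S ρ = twirl (pauli S) ρ := by
  ext x y
  rw [depolSet_apply, twirl, Matrix.sum_apply, Fintype.sum_prod_type]
  simp only [Matrix.smul_apply, pauli_mul_mul_apply, ← Finset.smul_sum, ← Finset.sum_mul,
    ← Complex.ofReal_sum, sum_phase_mul_phase]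
  split_ifs with h
  · rw [← Finset.mul_sum, ← Equiv.sum_comp (Equiv.addLeft x)]
    simp only [Equiv.coe_addLeft, piecewise_add_eq _ _ _ h,
      piecewise_add_eq _ _ _ fun i _ => rfl]
    simp
    field_simp
  · simp

theorem pauli_conj_depolSet (S : Finset (Fin n)) (k : (Fin n → Fin 2) × (Fin n → Fin 2))
    (ρ : Matrix (Fin n → Fin 2) (Fin n → Fin 2) ℂ) :
    pauli S k * depolSet S ρ * (pauli S k)ᴴ = depolSet S ρ := by
  ext x y
  have hp : ∀ z x : Fin n → Fin 2, S.piecewise z (x + mask S k.1) = S.piecewise z x := by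
    intro z x
    ext i
    by_cases hi : i ∈ S <;> simp [mask, hi]
  rw [pauli_mul_mul_apply, depolSet_apply, depolSet_apply]
  simp only [hp, Pi.add_apply, add_left_inj]
  split_ifs with h
  · rw [phase_congr k.2 h, phase_mul_self, Complex.ofReal_one, one_mul]
  · rw [mul_zero]

theorem depolSet_depolSet (S T : Finset (Fin n))
    (ρ : Matrix (Fin n → Fin 2) (Fin n → Fin 2) ℂ) :
    depolSet S (depolSet T ρ) = depolSet (S ∪ T) ρ := by
  ext x y
  simp only [depolSet_apply]
  have hT : ∀ z, (∀ i ∈ T, S.piecewise z x i = S.piecewise z y i) ↔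
      ∀ i ∈ T, i ∉ S → x i = y i := fun z => by
    refine forall₂_congr fun i _ => ?_
    by_cases hi : i ∈ S <;> simp [hi]
  have hST : (∀ i ∈ S ∪ T, x i = y i) ↔
      (∀ i ∈ S, x i = y i) ∧ ∀ i ∈ T, i ∉ S → x i = y i := by
    simp only [Finset.mem_union]
    grind
  simp only [hT, hST]
  by_cases h1 : ∀ i ∈ S, x i = y i
  swap
  · simp only [h1, if_false, false_and]
  by_cases h2 : ∀ i ∈ T, i ∉ S → x i = y i
  swap
  · simp only [h2, if_false, and_false, Finset.sum_const_zero, mul_zero, ite_self]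
  simp only [if_pos h1, if_pos h2, if_pos (And.intro h1 h2), ← Finset.mul_sum]
  let e : (Fin n → Fin 2) × (Fin n → Fin 2) → (Fin n → Fin 2) × (Fin n → Fin 2) :=
    fun q => (T.piecewise q.2 q.1, T.piecewise q.1 q.2)
  have he : Function.Involutive e := fun q => by
    ext i <;> by_cases hi : i ∈ T <;> simp [e, hi]
  have hpw : ∀ z z' u : Fin n → Fin 2, T.piecewise z' (S.piecewise z u) =
      (S ∪ T).piecewise (e (z, z')).1 u := by
    intro z z' u
    ext i
    by_cases hi : i ∈ T <;> by_cases hj : i ∈ S <;> simp [e, hi, hj]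
  simp only [hpw]
  rw [← Fintype.sum_prod_type' (f := fun z z' => ρ ((S ∪ T).piecewise (e (z, z')).1 x)
    ((S ∪ T).piecewise (e (z, z')).1 y))]
  have hsum : ∑ q, ρ ((S ∪ T).piecewise (e q).1 x) ((S ∪ T).piecewise (e q).1 y) =
      ∑ q : (Fin n → Fin 2) × (Fin n → Fin 2),
        ρ ((S ∪ T).piecewise q.1 x) ((S ∪ T).piecewise q.1 y) :=
    Equiv.sum_comp he.toPerm fun q => ρ ((S ∪ T).piecewise q.1 x) ((S ∪ T).piecewise q.1 y)
  rw [hsum, Fintype.sum_prod_type]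
  simp [← Finset.mul_sum]

theorem posSemidef_depolSet (S : Finset (Fin n))
    {ρ : Matrix (Fin n → Fin 2) (Fin n → Fin 2) ℂ} (hρ : ρ.PosSemidef) :
    (depolSet S ρ).PosSemidef :=
  depolSet_eq_twirl S ρ ▸ posSemidef_twirl _ hρ

theorem trace_depolSet (S : Finset (Fin n)) (ρ : Matrix (Fin n → Fin 2) (Fin n → Fin 2) ℂ) :
    (depolSet S ρ).trace = ρ.trace := by
  rw [depolSet_eq_twirl, trace_twirl (pauli_mem_unitaryGroup S)]

theorem depolSet_empty (ρ : Matrix (Fin n → Fin 2) (Fin n → Fin 2) ℂ) : depolSet ∅ ρ = ρ := by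
  ext x y
  simp [depolSet_apply]

theorem vnEntropy_depolSet_univ {ρ : Matrix (Fin n → Fin 2) (Fin n → Fin 2) ℂ}
    (htr : ρ.trace = 1) : vnEntropy (depolSet Finset.univ ρ) = n * Real.log 2 := by
  have h : depolSet Finset.univ ρ =
      algebraMap ℝ (Matrix (Fin n → Fin 2) (Fin n → Fin 2) ℂ) ((2 ^ n)⁻¹) := by
    ext x y
    have hxy : (∀ i ∈ Finset.univ, x i = y i) ↔ x = y := by simp [funext_iff]
    have htr' : ∑ z, ρ z z = 1 := htr
    simp only [depolSet_apply, hxy, Finset.piecewise_univ, htr', algebraMap_matrix_apply]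
    simp
  have hH : (depolSet Finset.univ ρ).IsHermitian := by
    rw [h]
    exact IsSelfAdjoint.algebraMap _ (.all _)
  have h2 := traceLog_self hH
  rw [traceLog, h, cfc_algebraMap, ← map_mul, ← h] at h2
  rw [← neg_eq_iff_eq_neg.2 h2, Algebra.algebraMap_eq_smul_one, Matrix.trace_smul,
    Complex.smul_re, Matrix.trace_one, Complex.natCast_re]
  simp
  field_simp

/-- Strong subadditivity, in the form of submodularity under depolarization. -/
theorem vnEntropy_add_vnEntropy_depolSet_union_le (S T : Finset (Fin n))
    {ρ : Matrix (Fin n → Fin 2) (Fin n → Fin 2) ℂ} (hρ : ρ.PosSemidef) :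
    vnEntropy ρ + vnEntropy (depolSet (S ∪ T) ρ) ≤
      vnEntropy (depolSet S ρ) + vnEntropy (depolSet T ρ) := by
  have hlog : ∀ {σ : Matrix (Fin n → Fin 2) (Fin n → Fin 2) ℂ}, σ.PosSemidef →
      traceLog σ (depolSet T σ) = -vnEntropy (depolSet T σ) := fun {σ} hσ => by
    have hinv := fun k => pauli_conj_depolSet T k σ
    simp only [depolSet_eq_twirl] at hinv ⊢
    exact traceLog_twirl (pauli_mem_unitaryGroup T) hσ hinv
  have hdom : ∃ c : ℝ, (c • depolSet T ρ - ρ).PosSemidef :=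
    depolSet_eq_twirl T ρ ▸ exists_smul_twirl_sub_posSemidef (pauli_zero T) hρ
  have h := vnEntropy_add_traceLog_le_twirl (pauli_mem_unitaryGroup S) hρ
    (posSemidef_depolSet T hρ) hdom
  rw [← depolSet_eq_twirl, ← depolSet_eq_twirl, depolSet_depolSet, Finset.union_comm,
    ← depolSet_depolSet, hlog hρ, hlog (posSemidef_depolSet S hρ), depolSet_depolSet,
    Finset.union_comm] at h
  linarith

/-- Depolarizing noise with parameter `p` on each of the qubits in `A`. -/
noncomputable def depolOn (p : ℝ) (A : Finset (Fin n))
    (ρ : Matrix (Fin n → Fin 2) (Fin n → Fin 2) ℂ) :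
    Matrix (Fin n → Fin 2) (Fin n → Fin 2) ℂ :=
  ∑ S ∈ A.powerset, (p ^ S.card * (1 - p) ^ (A.card - S.card)) • depolSet S ρ

theorem depolAll_eq_depolOn (p : ℝ) (ρ : Matrix (Fin n → Fin 2) (Fin n → Fin 2) ℂ) :
    depolAll p ρ = depolOn p Finset.univ ρ := by
  rw [depolAll, depolOn, Finset.powerset_univ]
  refine Finset.sum_congr rfl fun S _ => ?_
  ext x y
  simp

theorem depolOn_insert (p : ℝ) {A : Finset (Fin n)} {i : Fin n} (hi : i ∉ A)
    (ρ : Matrix (Fin n → Fin 2) (Fin n → Fin 2) ℂ) :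
    depolOn p (insert i A) ρ = (1 - p) • depolOn p A ρ + p • depolOn p A (depolSet {i} ρ) := by
  rw [depolOn, Finset.sum_powerset_insert hi, depolOn, depolOn, Finset.smul_sum, Finset.smul_sum]
  congr 1 <;> refine Finset.sum_congr rfl fun S hS => ?_
  · have hS' := Finset.card_le_card (Finset.mem_powerset.1 hS)
    rw [Finset.card_insert_of_notMem hi, Nat.succ_sub hS', pow_succ, smul_smul]
    congr 1
    ring
  · have hiS : i ∉ S := fun h => hi (Finset.mem_powerset.1 hS h)
    rw [Finset.card_insert_of_notMem hi, Finset.card_insert_of_notMem hiS,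
      Nat.add_sub_add_right, smul_smul, depolSet_depolSet, Finset.union_comm,
      ← Finset.insert_eq]
    congr 1
    ring

theorem posSemidef_depolOn {p : ℝ} (hp0 : 0 ≤ p) (hp1 : p ≤ 1) (A : Finset (Fin n))
    {ρ : Matrix (Fin n → Fin 2) (Fin n → Fin 2) ℂ} (hρ : ρ.PosSemidef) :
    (depolOn p A ρ).PosSemidef :=
  posSemidef_sum _ fun S _ => (posSemidef_depolSet S hρ).smul
    (mul_nonneg (pow_nonneg hp0 _) (pow_nonneg (sub_nonneg.2 hp1) _))

theorem trace_depolOn (p : ℝ) (A : Finset (Fin n))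
    (ρ : Matrix (Fin n → Fin 2) (Fin n → Fin 2) ℂ) : (depolOn p A ρ).trace = ρ.trace := by
  rw [depolOn, Matrix.trace_sum]
  simp only [Matrix.trace_smul, trace_depolSet]
  rw [← Finset.sum_smul, Finset.sum_pow_mul_eq_add_pow]
  simp

/-- Each qubit is depolarized at the cost of a convex combination of entropies. -/
theorem vnEntropy_depolOn_ge {p : ℝ} (hp0 : 0 ≤ p) (hp1 : p ≤ 1) (A : Finset (Fin n))
    {ρ : Matrix (Fin n → Fin 2) (Fin n → Fin 2) ℂ} (hρ : ρ.PosSemidef) :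
    (1 - p) * vnEntropy ρ + p * vnEntropy (depolSet A ρ) ≤ vnEntropy (depolOn p A ρ) := by
  induction A using Finset.induction_on generalizing ρ with
  | empty =>
    simp only [depolOn, Finset.powerset_empty, Finset.sum_singleton, depolSet_empty]
    simp [← add_mul]
  | insert i A hi ih =>
    have hρi := posSemidef_depolSet {i} hρ
    have h1 := ih hρ
    have h2 := ih hρi
    have h3 := vnEntropy_concave (posSemidef_depolOn hp0 hp1 A hρ)
      (posSemidef_depolOn hp0 hp1 A hρi) hp0 hp1
    have h4 := vnEntropy_add_vnEntropy_depolSet_union_le A {i} hρ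
    rw [depolSet_depolSet] at h2
    rw [depolOn_insert p hi, Finset.insert_eq, Finset.union_comm]
    have hq : 0 ≤ 1 - p := sub_nonneg.2 hp1
    have h5 := mul_le_mul_of_nonneg_left h1 hq
    have h6 := mul_le_mul_of_nonneg_left h2 hp0
    have h7 := mul_le_mul_of_nonneg_left h4 (mul_nonneg hp0 hq)
    linarith

/-- The entropy gain of one layer of depolarizing noise. -/
theorem vnEntropy_depolAll_ge {p : ℝ} (hp0 : 0 ≤ p) (hp1 : p ≤ 1)
    {ρ : Matrix (Fin n → Fin 2) (Fin n → Fin 2) ℂ} (hρ : ρ.PosSemidef) (htr : ρ.trace = 1) :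
    (1 - p) * vnEntropy ρ + p * (n * Real.log 2) ≤ vnEntropy (depolAll p ρ) := by
  rw [depolAll_eq_depolOn, ← vnEntropy_depolSet_univ htr]
  exact vnEntropy_depolOn_ge hp0 hp1 _ hρ

theorem vnEntropy_nonneg {ι : Type*} [Fintype ι] [DecidableEq ι] {ρ : Matrix ι ι ℂ}
    (hρ : ρ.PosSemidef) (htr : ρ.trace = 1) : 0 ≤ vnEntropy ρ := by
  have hsum : ∑ i, hρ.1.eigenvalues i = 1 := by
    have h := hρ.1.trace_eq_sum_eigenvalues
    rw [htr] at h
    simpa using (congrArg Complex.re h).symm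
  rw [vnEntropy_eq hρ.1, neg_nonneg]
  refine Finset.sum_nonpos fun i _ => mul_nonpos_of_nonneg_of_nonpos (hρ.eigenvalues_nonneg i)
    (Real.log_nonpos (hρ.eigenvalues_nonneg i) ?_)
  rw [← hsum]
  exact Finset.single_le_sum (fun i _ => hρ.eigenvalues_nonneg i) (Finset.mem_univ i)

theorem noisyCircuit_state {p : ℝ} (hp0 : 0 ≤ p) (hp1 : p ≤ 1)
    {U : ℕ → Matrix (Fin n → Fin 2) (Fin n → Fin 2) ℂ}
    {ρ : Matrix (Fin n → Fin 2) (Fin n → Fin 2) ℂ} (hρ : ρ.PosSemidef) (htr : ρ.trace = 1)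
    {L : ℕ} (hU : ∀ k < L, U k ∈ unitaryGroup (Fin n → Fin 2) ℂ) :
    (noisyCircuit p U L ρ).PosSemidef ∧ (noisyCircuit p U L ρ).trace = 1 := by
  induction L with
  | zero => exact ⟨hρ, htr⟩
  | succ L ih =>
    obtain ⟨h1, h2⟩ := ih fun k hk => hU k (hk.trans L.lt_succ_self)
    rw [noisyCircuit, depolAll_eq_depolOn]
    refine ⟨posSemidef_depolOn hp0 hp1 _ (h1.mul_mul_conjTranspose_same _), ?_⟩
    rw [trace_depolOn, Matrix.trace_mul_comm, ← Matrix.mul_assoc,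
      show (U L)ᴴ * U L = 1 from mem_unitaryGroup_iff'.1 (hU L L.lt_succ_self), Matrix.one_mul, h2]

end Depolarizing

/-- for a pure initial state and any `L`-layer noisy unitary circuit with
depolarizing parameter `p ∈ (0,1]`, the output entropy is at least `(1−(1−p)^L)·n·log 2`. -/
theorem entropy_noisy_circuit_lower_bound (n L : ℕ) (p : ℝ) (hp0 : 0 < p) (hp1 : p ≤ 1)
    (U : ℕ → Matrix (Fin n → Fin 2) (Fin n → Fin 2) ℂ)
    (hU : ∀ k < L, U k ∈ Matrix.unitaryGroup (Fin n → Fin 2) ℂ)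
    (ρ₀ : Matrix (Fin n → Fin 2) (Fin n → Fin 2) ℂ)
    (hρ₀ : ρ₀.PosSemidef) (htr : ρ₀.trace = 1) (hpure : ρ₀ * ρ₀ = ρ₀) :
    (1 - (1 - p) ^ L) * n * Real.log 2 ≤ vnEntropy (noisyCircuit p U L ρ₀) := by
  induction L with
  | zero => simpa [noisyCircuit] using vnEntropy_nonneg hρ₀ htr
  | succ L ih =>
    have hU' : ∀ k < L, U k ∈ unitaryGroup (Fin n → Fin 2) ℂ := fun k hk =>
      hU k (hk.trans L.lt_succ_self)
    obtain ⟨h1, h2⟩ := noisyCircuit_state hp0.le hp1 hρ₀ htr hU'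
    have hUL := hU L L.lt_succ_self
    have h3 := vnEntropy_depolAll_ge hp0.le hp1 (h1.mul_mul_conjTranspose_same (U L)) (by
      rw [Matrix.trace_mul_comm, ← Matrix.mul_assoc,
        show (U L)ᴴ * U L = 1 from mem_unitaryGroup_iff'.1 hUL, Matrix.one_mul, h2])
    rw [vnEntropy_unitary_conj hUL h1.1] at h3
    have h4 := mul_le_mul_of_nonneg_left (ih hU') (sub_nonneg.2 hp1)
    rw [noisyCircuit, pow_succ]
    linarith
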